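/- Let n ≥ 1, 1 ≤ p < ∞, and let f ∈ L^p(ℝⁿ). Writing Φ(t) = t^{-p/2} ∫_{ℝⁿ} ∫_{ℝⁿ} p_t(x,y) |f(y) − f(x)|^p dy dx, one has the chain of inequalities in [0,∞]: (2/p) · liminf_{t → 0⁺} Φ(t) ≤ liminf_{s → 1⁻} (1−s) 𝒩_{s,p}(f)^p ≤ limsup_{s → 1⁻} (1−s) 𝒩_{s,p}(f)^p ≤ (2/p) · limsup_{t → 0⁺} Φ(t). -/

import Mathlib

open Real MeasureTheory Filter Topology
open scoped ENNReal

/-!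
With `a = (1 - s) p / 2`, the number `(1 - s) 𝒩_{s,p}(f)^p` is `2 / p` times
`a ∫_0^∞ t ^ (a - 1) Φ(t) dt`, and `s → 1⁻` means `a → 0⁺`. On `(0, δ]` the measures
`a t ^ (a - 1) dt` have total mass `δ ^ a → 1` and concentrate at `0`, so they average `Φ` near `0`
and the two outer inequalities form an Abelian theorem for the Mellin transform. The part of the
integral over `(δ, ∞)` vanishes in the limit: the heat kernel has mass one in each variable, so
`∬ p_t(x, y) |f y - f x| ^ p` is bounded uniformly in `t` by a multiple of `‖f‖_p ^ p`.
-/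

section Mellin

variable {F : ℝ → ℝ≥0∞} {L M : ℝ≥0∞} {a b δ : ℝ}

/-- The Mellin transform `∫_0^∞ t ^ (a - 1) F(t) dt` of an extended nonnegative function at a real
exponent. Unlike `mellin` it takes the value `∞` where the integral diverges. -/
noncomputable def lmellin (F : ℝ → ℝ≥0∞) (a : ℝ) : ℝ≥0∞ :=
  ∫⁻ t in Set.Ioi (0 : ℝ), ENNReal.ofReal (t ^ (a - 1)) * F t

lemma lintegral_Ioc_zero_rpow_sub_one (ha : 0 < a) (hδ : 0 ≤ δ) :
    ∫⁻ t in Set.Ioc (0 : ℝ) δ, ENNReal.ofReal (t ^ (a - 1)) = ENNReal.ofReal (δ ^ a / a) := by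
  have hint : IntegrableOn (fun t : ℝ => t ^ (a - 1)) (Set.Ioc 0 δ) :=
    (intervalIntegrable_iff_integrableOn_Ioc_of_le hδ).1
      (intervalIntegral.intervalIntegrable_rpow' (by linarith))
  have hnonneg : 0 ≤ᵐ[volume.restrict (Set.Ioc 0 δ)] fun t : ℝ => t ^ (a - 1) :=
    ae_restrict_of_forall_mem measurableSet_Ioc fun t ht => rpow_nonneg ht.1.le _
  rw [← ofReal_integral_eq_lintegral_ofReal hint hnonneg, ← intervalIntegral.integral_of_le hδ,
    integral_rpow (Or.inl (by linarith)), sub_add_cancel, zero_rpow ha.ne', sub_zero]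

lemma ofReal_mul_lintegral_Ioc_zero_rpow_mul_const (ha : 0 < a) (hδ : 0 ≤ δ) (M : ℝ≥0∞) :
    ENNReal.ofReal a * ∫⁻ t in Set.Ioc (0 : ℝ) δ, ENNReal.ofReal (t ^ (a - 1)) * M =
      ENNReal.ofReal (δ ^ a) * M := by
  rw [lintegral_mul_const _ (by fun_prop), lintegral_Ioc_zero_rpow_sub_one ha hδ, ← mul_assoc,
    ← ENNReal.ofReal_mul ha.le, mul_div_cancel₀ _ ha.ne']

lemma ofReal_rpow_mul_le_mul_lmellin (ha : 0 < a) (hδ : 0 ≤ δ)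
    (hF : ∀ t ∈ Set.Ioc 0 δ, L ≤ F t) :
    ENNReal.ofReal (δ ^ a) * L ≤ ENNReal.ofReal a * lmellin F a := by
  rw [← ofReal_mul_lintegral_Ioc_zero_rpow_mul_const ha hδ, lmellin]
  gcongr ENNReal.ofReal a * ?_
  calc ∫⁻ t in Set.Ioc (0 : ℝ) δ, ENNReal.ofReal (t ^ (a - 1)) * L
      ≤ ∫⁻ t in Set.Ioc (0 : ℝ) δ, ENNReal.ofReal (t ^ (a - 1)) * F t :=
        setLIntegral_mono' measurableSet_Ioc fun t ht => mul_le_mul_right (hF t ht) _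
    _ ≤ ∫⁻ t in Set.Ioi (0 : ℝ), ENNReal.ofReal (t ^ (a - 1)) * F t :=
        lintegral_mono_set Set.Ioc_subset_Ioi_self

lemma mul_lmellin_le (ha : 0 < a) (hδ : 0 ≤ δ) (hF : ∀ t ∈ Set.Ioc 0 δ, F t ≤ M) :
    ENNReal.ofReal a * lmellin F a ≤ ENNReal.ofReal (δ ^ a) * M +
      ENNReal.ofReal a * ∫⁻ t in Set.Ioi δ, ENNReal.ofReal (t ^ (a - 1)) * F t := by
  rw [← ofReal_mul_lintegral_Ioc_zero_rpow_mul_const ha hδ, ← mul_add, lmellin,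
    ← Set.Ioc_union_Ioi_eq_Ioi hδ,
    lintegral_union measurableSet_Ioi (Set.Ioc_disjoint_Ioi le_rfl)]
  gcongr ENNReal.ofReal a * (?_ + _)
  exact setLIntegral_mono' measurableSet_Ioc fun t ht => mul_le_mul_right (hF t ht) _

lemma tendsto_ofReal_rpow_mul_nhdsGT_zero (hδ : 0 < δ) (M : ℝ≥0∞) :
    Tendsto (fun a : ℝ => ENNReal.ofReal (δ ^ a) * M) (𝓝[>] 0) (𝓝 M) := by
  have hpow : Tendsto (fun a : ℝ => ENNReal.ofReal (δ ^ a)) (𝓝[>] 0) (𝓝 1) := by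
    have hcont : Continuous fun a : ℝ => δ ^ a := continuous_const_rpow hδ.ne'
    simpa using ENNReal.tendsto_ofReal ((hcont.tendsto 0).mono_left nhdsWithin_le_nhds)
  simpa using ENNReal.Tendsto.mul_const hpow (Or.inl one_ne_zero)

lemma setLIntegral_Ioi_rpow_mul_le (hδ : 0 < δ) (hab : a ≤ b) :
    ∫⁻ t in Set.Ioi δ, ENNReal.ofReal (t ^ (a - 1)) * F t ≤
      ENNReal.ofReal (δ ^ (a - b)) *
        ∫⁻ t in Set.Ioi δ, ENNReal.ofReal (t ^ (b - 1)) * F t := by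
  rw [← lintegral_const_mul' _ _ ENNReal.ofReal_ne_top]
  refine setLIntegral_mono' measurableSet_Ioi fun t ht => ?_
  have ht₀ : 0 < t := hδ.trans ht
  rw [← mul_assoc, ← ENNReal.ofReal_mul (by positivity)]
  gcongr ENNReal.ofReal ?_ * _
  calc t ^ (a - 1) = t ^ (a - b) * t ^ (b - 1) := by rw [← rpow_add ht₀]; ring_nf
    _ ≤ δ ^ (a - b) * t ^ (b - 1) := by
      gcongr ?_ * _
      exact rpow_le_rpow_of_nonpos hδ (le_of_lt ht) (sub_nonpos.2 hab)

lemma tendsto_mul_setLIntegral_Ioi_rpow_mul_nhdsGT_zero (hb : 0 < b) (hδ : 0 < δ)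
    (hF : ∫⁻ t in Set.Ioi δ, ENNReal.ofReal (t ^ (b - 1)) * F t ≠ ∞) :
    Tendsto (fun a : ℝ =>
        ENNReal.ofReal a * ∫⁻ t in Set.Ioi δ, ENNReal.ofReal (t ^ (a - 1)) * F t)
      (𝓝[>] 0) (𝓝 0) := by
  set I := ∫⁻ t in Set.Ioi δ, ENNReal.ofReal (t ^ (b - 1)) * F t
  have hbound : Tendsto (fun a : ℝ => ENNReal.ofReal (a * δ ^ (a - b)) * I) (𝓝[>] 0) (𝓝 0) := by
    have hcont : Continuous fun a : ℝ => a * δ ^ (a - b) :=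
      continuous_id.mul ((continuous_const_rpow hδ.ne').comp (by fun_prop))
    have hreal := (hcont.tendsto 0).mono_left (nhdsWithin_le_nhds (s := Set.Ioi 0))
    simpa using ENNReal.Tendsto.mul_const (ENNReal.tendsto_ofReal hreal) (Or.inr hF)
  refine tendsto_of_tendsto_of_tendsto_of_le_of_le' tendsto_const_nhds hbound
    (Eventually.of_forall fun _ => zero_le) ?_
  filter_upwards [Ioc_mem_nhdsGT hb] with a ha
  rw [ENNReal.ofReal_mul ha.1.le, mul_assoc]
  gcongr
  exact setLIntegral_Ioi_rpow_mul_le hδ ha.2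

theorem liminf_le_liminf_mul_lmellin (F : ℝ → ℝ≥0∞) :
    liminf F (𝓝[>] 0) ≤ liminf (fun a => ENNReal.ofReal a * lmellin F a) (𝓝[>] 0) := by
  refine le_of_forall_lt fun L hL => ?_
  obtain ⟨L', hLL', hL'⟩ := exists_between hL
  obtain ⟨δ, hδ : 0 < δ, hF⟩ :=
    mem_nhdsGT_iff_exists_Ioc_subset.1 (eventually_lt_of_lt_liminf hL')
  refine hLL'.trans_le ?_
  rw [← (tendsto_ofReal_rpow_mul_nhdsGT_zero hδ L').liminf_eq]
  refine liminf_le_liminf ?_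
  filter_upwards [self_mem_nhdsWithin] with a ha
  exact ofReal_rpow_mul_le_mul_lmellin ha hδ.le fun t ht => (hF ht).le

theorem limsup_mul_lmellin_le_limsup (hb : 0 < b)
    (hF : ∀ δ > 0, ∫⁻ t in Set.Ioi δ, ENNReal.ofReal (t ^ (b - 1)) * F t ≠ ∞) :
    limsup (fun a => ENNReal.ofReal a * lmellin F a) (𝓝[>] 0) ≤ limsup F (𝓝[>] 0) := by
  refine le_of_forall_gt_imp_ge_of_dense fun M hM => ?_
  obtain ⟨δ, hδ : 0 < δ, hFM⟩ :=
    mem_nhdsGT_iff_exists_Ioc_subset.1 (eventually_lt_of_limsup_lt hM)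
  have hlim := (tendsto_ofReal_rpow_mul_nhdsGT_zero hδ M).add
    (tendsto_mul_setLIntegral_Ioi_rpow_mul_nhdsGT_zero hb hδ (hF δ hδ))
  rw [← add_zero M, ← hlim.limsup_eq]
  refine limsup_le_limsup ?_
  filter_upwards [self_mem_nhdsWithin] with a ha
  exact mul_lmellin_le ha hδ.le fun t ht => (hFM ht).le

end Mellin

lemma lintegral_lintegral_mul_enorm_sub_rpow_le {α E : Type*} [MeasurableSpace α] {μ : Measure α}
    [SFinite μ] [NormedAddCommGroup E] {k : α → α → ℝ≥0∞} (hk : Measurable (Function.uncurry k))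
    {C : ℝ≥0∞} (hrow : ∀ x, ∫⁻ y, k x y ∂μ ≤ C) (hcol : ∀ y, ∫⁻ x, k x y ∂μ ≤ C)
    {f : α → E} (hf : AEStronglyMeasurable f μ) {p : ℝ} (hp : 0 ≤ p) :
    ∫⁻ x, ∫⁻ y, k x y * ‖f y - f x‖ₑ ^ p ∂μ ∂μ ≤
      2 ^ p * (2 * (C * ∫⁻ x, ‖f x‖ₑ ^ p ∂μ)) := by
  have hfp : AEMeasurable (fun x => ‖f x‖ₑ ^ p) μ := hf.enorm.pow_const p
  have hk_row (x : α) : Measurable (k x) := hk.of_uncurry_left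
  have hk_col (y : α) : Measurable (k · y) := hk.of_uncurry_right
  have hconst (x : α) : ∫⁻ y, k x y * ‖f x‖ₑ ^ p ∂μ ≤ C * ‖f x‖ₑ ^ p := by
    rw [lintegral_mul_const _ (hk_row x)]
    gcongr
    exact hrow x
  have hswap : ∫⁻ x, ∫⁻ y, k x y * ‖f y‖ₑ ^ p ∂μ ∂μ ≤ C * ∫⁻ y, ‖f y‖ₑ ^ p ∂μ := by
    rw [lintegral_lintegral_swap (hk.aemeasurable.mul hfp.comp_snd), ← lintegral_const_mul'' _ hfp]
    gcongr with y
    rw [lintegral_mul_const _ (hk_col y)]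
    gcongr
    exact hcol y
  have hpointwise (x y : α) :
      k x y * ‖f y - f x‖ₑ ^ p ≤ 2 ^ p * (k x y * ‖f x‖ₑ ^ p + k x y * ‖f y‖ₑ ^ p) := by
    rw [← mul_add, mul_left_comm, add_comm (‖f x‖ₑ ^ p)]
    gcongr
    exact (ENNReal.rpow_le_rpow enorm_sub_le hp).trans
      (ENNReal.add_rpow_le_two_rpow_mul_rpow_add_rpow _ _ hp)
  have htwo : (2 : ℝ≥0∞) ^ p ≠ ∞ := by finiteness
  calc ∫⁻ x, ∫⁻ y, k x y * ‖f y - f x‖ₑ ^ p ∂μ ∂μ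
      ≤ ∫⁻ x, ∫⁻ y, 2 ^ p * (k x y * ‖f x‖ₑ ^ p + k x y * ‖f y‖ₑ ^ p) ∂μ ∂μ :=
        lintegral_mono fun x => lintegral_mono fun y => hpointwise x y
    _ = 2 ^ p * ∫⁻ x, (∫⁻ y, k x y * ‖f x‖ₑ ^ p ∂μ + ∫⁻ y, k x y * ‖f y‖ₑ ^ p ∂μ) ∂μ := by
        simp only [lintegral_const_mul' _ _ htwo, lintegral_add_left ((hk_row _).mul_const _)]
    _ ≤ 2 ^ p * ∫⁻ x, (C * ‖f x‖ₑ ^ p + ∫⁻ y, k x y * ‖f y‖ₑ ^ p ∂μ) ∂μ := by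
        gcongr with x
        exact hconst x
    _ ≤ 2 ^ p * (2 * (C * ∫⁻ x, ‖f x‖ₑ ^ p ∂μ)) := by
        rw [lintegral_add_left' (hfp.const_mul C), lintegral_const_mul'' _ hfp, two_mul]
        gcongr

section Heat

variable {V E : Type*} [NormedAddCommGroup V] [InnerProductSpace ℝ V]
  [NormedAddCommGroup E] {f : V → E} {p t : ℝ}

/-- The Gauss–Weierstrass kernel `p_t(x, y)` of a Euclidean space `V`; meaningful for `0 < t`. -/
noncomputable def heatKernel (t : ℝ) (x y : V) : ℝ :=
  (4 * π * t) ^ (-(Module.finrank ℝ V : ℝ) / 2) * exp (-‖x - y‖ ^ 2 / (4 * t))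

lemma heatKernel_comm (t : ℝ) (x y : V) : heatKernel t x y = heatKernel t y x := by
  rw [heatKernel, heatKernel, norm_sub_rev]

lemma heatKernel_nonneg (ht : 0 ≤ t) (x y : V) : 0 ≤ heatKernel t x y := by
  unfold heatKernel
  positivity

variable [FiniteDimensional ℝ V] [MeasurableSpace V] [BorelSpace V]

lemma measurable_uncurry_heatKernel (t : ℝ) :
    Measurable (Function.uncurry (heatKernel (V := V) t)) := by
  unfold heatKernel Function.uncurry
  fun_prop

lemma integral_heatKernel (ht : 0 < t) (x : V) : ∫ y, heatKernel t x y = 1 := by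
  have hpos : 0 < 4 * π * t := by positivity
  have hgauss : ∫ v : V, exp (-‖v‖ ^ 2 / (4 * t)) =
      (4 * π * t) ^ ((Module.finrank ℝ V : ℝ) / 2) := by
    convert! GaussianFourier.integral_rexp_neg_mul_sq_norm (V := V)
      (show 0 < 1 / (4 * t) by positivity) using 2
    · ext v
      ring_nf
    · field_simp
  simp only [heatKernel, integral_const_mul]
  rw [integral_sub_left_eq_self (fun v : V => exp (-‖v‖ ^ 2 / (4 * t))) volume x, hgauss,
    ← rpow_add hpos, neg_div, neg_add_cancel, rpow_zero]

lemma lintegral_heatKernel (ht : 0 < t) (x : V) :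
    ∫⁻ y, ENNReal.ofReal (heatKernel t x y) = 1 := by
  have hint : Integrable (heatKernel t x) :=
    .of_integral_ne_zero (by rw [integral_heatKernel ht]; exact one_ne_zero)
  rw [← ofReal_integral_eq_lintegral_ofReal hint (.of_forall (heatKernel_nonneg ht.le x)),
    integral_heatKernel ht, ENNReal.ofReal_one]

/-- The double integral `∬ p_t(x, y) ‖f y - f x‖ ^ p dy dx` of the heat kernel at time `t` against
the `p`-th power of the increments of `f`. -/
noncomputable def heatEnergy (p : ℝ) (f : V → E) (t : ℝ) : ℝ≥0∞ :=
  ∫⁻ x, ∫⁻ y, ENNReal.ofReal (heatKernel t x y * ‖f y - f x‖ ^ p)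

/-- The normalised energy `Φ(t) = t ^ (-p / 2) ∬ p_t(x, y) ‖f y - f x‖ ^ p dy dx`, whose limits as
`t → 0⁺` are compared with the Besov seminorms. -/
noncomputable def scaledHeatEnergy (p : ℝ) (f : V → E) (t : ℝ) : ℝ≥0∞ :=
  ENNReal.ofReal (t ^ (-(p / 2))) * heatEnergy p f t

/-- The `p`-th power `𝒩_{s,p}(f)^p` of the heat-semigroup Besov seminorm, with value `∞`
allowed. -/
noncomputable def heatBesov (p : ℝ) (f : V → E) (s : ℝ) : ℝ≥0∞ :=
  ∫⁻ t in Set.Ioi (0 : ℝ), ENNReal.ofReal (t ^ (-(s * p / 2 + 1))) * heatEnergy p f t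

lemma heatEnergy_le (hp : 0 ≤ p) (hf : AEStronglyMeasurable f volume) (ht : 0 < t) :
    heatEnergy p f t ≤ 2 ^ p * (2 * ∫⁻ x, ‖f x‖ₑ ^ p) := by
  have hsplit (x y : V) : ENNReal.ofReal (heatKernel t x y * ‖f y - f x‖ ^ p) =
      ENNReal.ofReal (heatKernel t x y) * ‖f y - f x‖ₑ ^ p := by
    rw [ENNReal.ofReal_mul (heatKernel_nonneg ht.le x y),
      ← ENNReal.ofReal_rpow_of_nonneg (norm_nonneg _) hp, ofReal_norm]
  simp only [heatEnergy, hsplit]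
  simpa only [one_mul] using lintegral_lintegral_mul_enorm_sub_rpow_le
    (measurable_uncurry_heatKernel t).ennreal_ofReal (fun x => (lintegral_heatKernel ht x).le)
    (fun y => by simp only [heatKernel_comm t _ y, lintegral_heatKernel ht, le_rfl]) hf hp

lemma setLIntegral_Ioi_rpow_mul_scaledHeatEnergy_ne_top (hp : 0 < p)
    (hf : MemLp f (ENNReal.ofReal p) volume) {b δ : ℝ} (hb : b < p / 2) (hδ : 0 < δ) :
    ∫⁻ t in Set.Ioi δ, ENNReal.ofReal (t ^ (b - 1)) * scaledHeatEnergy p f t ≠ ∞ := by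
  have hfp : ∫⁻ x, ‖f x‖ₑ ^ p ≠ ∞ := by
    simpa only [ENNReal.toReal_ofReal hp.le] using
      (lintegral_rpow_enorm_lt_top_of_eLpNorm_lt_top (ENNReal.ofReal_pos.2 hp).ne'
        ENNReal.ofReal_ne_top hf.eLpNorm_lt_top).ne
  set C := 2 ^ p * (2 * ∫⁻ x, ‖f x‖ₑ ^ p)
  have hC : C ≠ ∞ := by finiteness
  have hpow : ∫⁻ t in Set.Ioi δ, ENNReal.ofReal (t ^ (b - 1 + -(p / 2))) ≠ ∞ :=
    (integrableOn_Ioi_rpow_of_lt (by linarith) hδ).lintegral_lt_top.ne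
  refine ne_top_of_le_ne_top (ENNReal.mul_ne_top hpow hC) ?_
  rw [← lintegral_mul_const' _ _ hC]
  refine setLIntegral_mono' measurableSet_Ioi fun t ht => ?_
  have ht₀ : 0 < t := hδ.trans ht
  rw [scaledHeatEnergy, ← mul_assoc, ← ENNReal.ofReal_mul (by positivity), ← rpow_add ht₀]
  gcongr
  exact heatEnergy_le hp.le hf.aestronglyMeasurable ht₀

lemma heatBesov_eq_lmellin (p : ℝ) (f : V → E) (s : ℝ) :
    heatBesov p f s = lmellin (scaledHeatEnergy p f) ((1 - s) * p / 2) := by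
  refine setLIntegral_congr_fun measurableSet_Ioi fun t (ht : 0 < t) => ?_
  dsimp only [scaledHeatEnergy]
  rw [← mul_assoc, ← ENNReal.ofReal_mul (by positivity), ← rpow_add ht]
  ring_nf

lemma ofReal_one_sub_mul_heatBesov (hp : 0 < p) (f : V → E) (s : ℝ) :
    ENNReal.ofReal (1 - s) * heatBesov p f s =
      ENNReal.ofReal (2 / p) * (ENNReal.ofReal ((1 - s) * p / 2) *
        lmellin (scaledHeatEnergy p f) ((1 - s) * p / 2)) := by
  rw [heatBesov_eq_lmellin, ← mul_assoc, ← ENNReal.ofReal_mul (by positivity)]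
  field_simp

lemma tendsto_one_sub_mul_div_two_nhdsGT_zero (hp : 0 < p) :
    Tendsto (fun s : ℝ => (1 - s) * p / 2) (𝓝[<] 1) (𝓝[>] 0) := by
  have hcont : Continuous fun s : ℝ => (1 - s) * p / 2 := by fun_prop
  refine tendsto_nhdsWithin_iff.2
    ⟨by simpa using (hcont.tendsto 1).mono_left nhdsWithin_le_nhds, ?_⟩
  filter_upwards [self_mem_nhdsWithin] with s (hs : s < 1)
  have : 0 < 1 - s := sub_pos.2 hs
  exact Set.mem_Ioi.2 (by positivity)

theorem besov_heat_liminf_limsup_chain_general (hp : 0 < p)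
    (hf : MemLp f (ENNReal.ofReal p) volume) :
    ENNReal.ofReal (2 / p) * liminf (scaledHeatEnergy p f) (𝓝[>] 0)
        ≤ liminf (fun s => ENNReal.ofReal (1 - s) * heatBesov p f s) (𝓝[<] 1)
    ∧ liminf (fun s => ENNReal.ofReal (1 - s) * heatBesov p f s) (𝓝[<] 1)
        ≤ limsup (fun s => ENNReal.ofReal (1 - s) * heatBesov p f s) (𝓝[<] 1)
    ∧ limsup (fun s => ENNReal.ofReal (1 - s) * heatBesov p f s) (𝓝[<] 1)
        ≤ ENNReal.ofReal (2 / p) * limsup (scaledHeatEnergy p f) (𝓝[>] 0) := by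
  have hexp := tendsto_one_sub_mul_div_two_nhdsGT_zero hp
  refine ⟨?_, liminf_le_limsup, ?_⟩ <;> simp only [ofReal_one_sub_mul_heatBesov hp]
  · rw [ENNReal.liminf_const_mul_of_ne_top ENNReal.ofReal_ne_top]
    gcongr
    exact (liminf_le_liminf_mul_lmellin _).trans hexp.liminf_le_liminf_comp
  · rw [ENNReal.limsup_const_mul_of_ne_top ENNReal.ofReal_ne_top]
    gcongr
    have htail (δ : ℝ) (hδ : 0 < δ) := setLIntegral_Ioi_rpow_mul_scaledHeatEnergy_ne_top hp hf
      (show p / 4 < p / 2 by linarith) hδ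
    exact hexp.limsup_comp_le_limsup.trans (limsup_mul_lmellin_le_limsup (by positivity) htail)

end Heat

lemma heatEnergy_euclideanSpace {n : ℕ} (p : ℝ) (f : EuclideanSpace ℝ (Fin n) → ℝ) (t : ℝ) :
    heatEnergy p f t = ∫⁻ x, ∫⁻ y, ENNReal.ofReal
      ((4 * π * t) ^ (-(n : ℝ) / 2) * exp (-‖x - y‖ ^ 2 / (4 * t)) * |f y - f x| ^ p) := by
  simp only [heatEnergy, heatKernel, finrank_euclideanSpace_fin, norm_eq_abs]

theorem besov_heat_liminf_limsup_chain (n : ℕ) (hn : 1 ≤ n) (p : ℝ) (hp : 1 ≤ p)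
    (f : EuclideanSpace ℝ (Fin n) → ℝ) (hf : MemLp f (ENNReal.ofReal p) volume)
    (Φ : ℝ → ℝ≥0∞)
    (hΦ : ∀ t : ℝ, Φ t = ENNReal.ofReal (t ^ (-(p / 2))) *
        ∫⁻ x, ∫⁻ y, ENNReal.ofReal
          ((4 * π * t) ^ (-(n : ℝ) / 2) * Real.exp (-‖x - y‖ ^ 2 / (4 * t)) *
            |f y - f x| ^ p))
    (N : ℝ → ℝ≥0∞)
    (hN : ∀ s : ℝ, N s = ∫⁻ t in Set.Ioi (0 : ℝ),
        ENNReal.ofReal (t ^ (-(s * p / 2 + 1))) *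
          ∫⁻ x, ∫⁻ y, ENNReal.ofReal
            ((4 * π * t) ^ (-(n : ℝ) / 2) * Real.exp (-‖x - y‖ ^ 2 / (4 * t)) *
              |f y - f x| ^ p)) :
    ENNReal.ofReal (2 / p) * Filter.liminf Φ (𝓝[>] (0 : ℝ))
        ≤ Filter.liminf (fun s : ℝ => ENNReal.ofReal (1 - s) * N s) (𝓝[<] (1 : ℝ))
    ∧ Filter.liminf (fun s : ℝ => ENNReal.ofReal (1 - s) * N s) (𝓝[<] (1 : ℝ))
        ≤ Filter.limsup (fun s : ℝ => ENNReal.ofReal (1 - s) * N s) (𝓝[<] (1 : ℝ))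
    ∧ Filter.limsup (fun s : ℝ => ENNReal.ofReal (1 - s) * N s) (𝓝[<] (1 : ℝ))
        ≤ ENNReal.ofReal (2 / p) * Filter.limsup Φ (𝓝[>] (0 : ℝ)) := by
  obtain rfl : Φ = scaledHeatEnergy p f := funext fun t => by
    rw [hΦ, scaledHeatEnergy, heatEnergy_euclideanSpace]
  obtain rfl : N = heatBesov p f := funext fun s => by
    simp only [hN, heatBesov, heatEnergy_euclideanSpace]
  exact besov_heat_liminf_limsup_chain_general (zero_lt_one.trans_le hp) hf
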